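/- arXiv:1602.01337 — 2 statements merged into one kernel-verified Lean document; each statement's English description precedes it below -/
import Mathlib

section
/- For every positive integer n, the graph K_{1,n}^l (the star K_{1,n} with a loop attached at its central vertex) is perfect super edge-magic: for every integer k with 2n+4 ≤ k ≤ 3n+4 there exists a super edge-magic labeling of K_{1,n}^l with valence k, and conversely every super edge-magic labeling of K_{1,n}^l has valence in {2n+4, 2n+5, …, 3n+4}. In particular K_{1,n}^l has exactly n+1 distinct super edge-magic valences. -/
/-- An edge-magic labeling of a finite graph presented by an endpoint map
`ends : E → V × V` (loops and multiple edges allowed): the vertex labels `fv`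
and edge labels `fe` together form a bijection onto `{1, …, |V| + |E|}` and
every edge `e` satisfies `fv (ends e).1 + fe e + fv (ends e).2 = k`.
The constant `k` is the valence. -/
def IsEdgeMagic {V E : Type} [Fintype V] [Fintype E] (ends : E → V × V)
    (fv : V → ℕ) (fe : E → ℕ) (k : ℕ) : Prop :=
  Function.Injective (Sum.elim fv fe) ∧
  Set.range (Sum.elim fv fe) = Set.Icc 1 (Fintype.card V + Fintype.card E) ∧
  ∀ e : E, fv (ends e).1 + fe e + fv (ends e).2 = k

/-- A super edge-magic labeling: edge-magic, and moreover the vertex labels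
are exactly `{1, …, |V|}`. -/
def IsSuperEdgeMagic {V E : Type} [Fintype V] [Fintype E] (ends : E → V × V)
    (fv : V → ℕ) (fe : E → ℕ) (k : ℕ) : Prop :=
  IsEdgeMagic ends fv fe k ∧ Set.range fv = Set.Icc 1 (Fintype.card V)

/-- The cycle `C_m`: vertices `Fin m`, edge `i` joins `i` to `i+1 (mod m)`. -/
def cycleEnds (m : ℕ) : Fin m → Fin m × Fin m :=
  fun i => (i, ⟨(i.val + 1) % m, Nat.mod_lt _ i.pos⟩)

/-- The crown `C_m ⊙ K̄_n`: vertices are `Sum.inl i` (cycle vertices `v_i`) and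
`Sum.inr (i, j)` (pendant vertices `v_i^j`); edges are the `m` cycle edges and
the `m * n` pendant edges. -/
def crownEnds (m n : ℕ) :
    (Fin m ⊕ Fin m × Fin n) → (Fin m ⊕ Fin m × Fin n) × (Fin m ⊕ Fin m × Fin n)
  | Sum.inl i => (Sum.inl i, Sum.inl ⟨(i.val + 1) % m, Nat.mod_lt _ i.pos⟩)
  | Sum.inr p => (Sum.inl p.1, Sum.inr p)

/-- The graph `K_{1,n}^l`: the star `K_{1,n}` (center `none`, leaves `some j`)
with a loop (edge `none`) attached at the center. -/
def starLoopEnds (n : ℕ) : Option (Fin n) → Option (Fin n) × Option (Fin n)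
  | none => (none, none)
  | some j => (none, some j)

/-!
The edge labels of a super edge-magic labeling `f` are forced by its vertex labels: the edge
sums must be `|E|` consecutive integers, the least of them `k - |V| - |E|`. In `K_{1,n}^l`
with center `c` the edge sums are `f(c) + f(v)` for `v` ranging over all vertices, so they
always are `n + 1` consecutive integers, the least of them `f(c) + 1`. Hence the valence is
`2n + 3 + f(c)`, where the central label `f(c)` may be any of `1, …, n + 1`.
-/

theorem injective_of_ncard_range_eq {α β : Type*} [Finite α] {f : α → β}
    (h : (Set.range f).ncard = Nat.card α) : Function.Injective f := by
  rw [← Set.injOn_univ]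
  refine Set.injOn_of_ncard_image_eq ?_
  rw [Set.image_univ, h, Set.ncard_univ]

theorem range_eq_Ico_iff_of_add_eq {α : Type*} {f g : α → ℕ} {a b c d k : ℕ}
    (h : ∀ x, f x + g x = k) (had : a + d = k) (hbc : b + c = k) :
    Set.range f = Set.Ico a b ↔ Set.range g = Set.Ioc c d := by
  simp only [Set.ext_iff, Set.mem_range, Set.mem_Ico, Set.mem_Ioc]
  constructor <;> intro hrange m <;> constructor
  · rintro ⟨x, rfl⟩
    have := (hrange (f x)).1 ⟨x, rfl⟩
    have := h x
    omega
  · intro hm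
    obtain ⟨x, hx⟩ := (hrange (k - m)).2 (by omega)
    exact ⟨x, by have := h x; omega⟩
  · rintro ⟨x, rfl⟩
    have := (hrange (g x)).1 ⟨x, rfl⟩
    have := h x
    omega
  · intro hm
    obtain ⟨x, hx⟩ := (hrange (k - m)).2 (by omega)
    exact ⟨x, by have := h x; omega⟩

theorem exists_range_eq_Icc_card_and_apply_eq {α : Type*} [Fintype α] (a : α)
    {c : ℕ} (hc : c ∈ Set.Icc 1 (Fintype.card α)) :
    ∃ f : α → ℕ, Set.range f = Set.Icc 1 (Fintype.card α) ∧ f a = c := by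
  obtain ⟨hc_pos, hc_le⟩ := hc
  let e : α ≃ Fin (Fintype.card α) := Fintype.equivFin α
  let σ := e.trans (Equiv.swap (e a) ⟨c - 1, by omega⟩)
  refine ⟨fun x => σ x + 1, ?_, ?_⟩
  · ext m
    constructor
    · rintro ⟨x, rfl⟩
      exact ⟨Nat.le_add_left _ _, (σ x).isLt⟩
    · rintro ⟨hm_pos, hm_le⟩
      refine ⟨σ.symm ⟨m - 1, by omega⟩, ?_⟩
      simp only [Equiv.apply_symm_apply, Nat.sub_add_cancel hm_pos]
  · simp only [σ, Equiv.trans_apply, Equiv.swap_apply_left, Nat.sub_add_cancel hc_pos]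

/-- The sum of the labels at the two endpoints of an edge, to which the edge label is added to give
the valence; a loop counts its vertex twice. -/
def edgeSum {V E : Type*} (ends : E → V × V) (fv : V → ℕ) (e : E) : ℕ :=
  fv (ends e).1 + fv (ends e).2

section General

variable {V E : Type} [Fintype V] [Fintype E] {ends : E → V × V} {fv : V → ℕ} {fe : E → ℕ} {k : ℕ}

theorem isSuperEdgeMagic_iff :
    IsSuperEdgeMagic ends fv fe k ↔
      Set.range fv = Set.Icc 1 (Fintype.card V) ∧
      Set.range fe = Set.Ioc (Fintype.card V) (Fintype.card V + Fintype.card E) ∧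
      ∀ e, edgeSum ends fv e + fe e = k := by
  have hsum (e : E) : fv (ends e).1 + fe e + fv (ends e).2 = edgeSum ends fv e + fe e :=
    add_right_comm _ _ _
  simp only [IsSuperEdgeMagic, IsEdgeMagic, Sum.elim_injective, Set.Sum.elim_range, hsum]
  constructor
  · rintro ⟨⟨⟨-, -, hne⟩, hunion, hmagic⟩, hfv⟩
    refine ⟨hfv, ?_, hmagic⟩
    have hdisj : Disjoint (Set.range fv) (Set.range fe) := Set.disjoint_range_iff.2 hne
    rw [← Set.union_sdiff_cancel_left hdisj.le_bot, hunion, hfv]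
    ext m
    simp only [Set.mem_sdiff, Set.mem_Icc, Set.mem_Ioc]
    omega
  · rintro ⟨hfv, hfe, hmagic⟩
    refine ⟨⟨⟨injective_of_ncard_range_eq ?_, injective_of_ncard_range_eq ?_, fun v e hve => ?_⟩,
      ?_, hmagic⟩, hfv⟩
    · simp [hfv]
    · simp [hfe]
    · have hv : fv v ∈ Set.Icc 1 (Fintype.card V) := hfv ▸ Set.mem_range_self v
      have he : fe e ∈ Set.Ioc (Fintype.card V) (Fintype.card V + Fintype.card E) :=
        hfe ▸ Set.mem_range_self e
      exact (hve ▸ he.1).not_ge hv.2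
    · ext m
      simp only [hfv, hfe, Set.mem_union, Set.mem_Icc, Set.mem_Ioc]
      omega

theorem exists_isSuperEdgeMagic_iff [Nonempty E] :
    (∃ fe, IsSuperEdgeMagic ends fv fe k) ↔
      Set.range fv = Set.Icc 1 (Fintype.card V) ∧
      ∃ s, k = Fintype.card V + Fintype.card E + s ∧
        Set.range (edgeSum ends fv) = Set.Ico s (s + Fintype.card E) := by
  simp only [isSuperEdgeMagic_iff]
  constructor
  · rintro ⟨fe, hfv, hfe, hmagic⟩
    obtain ⟨e, he⟩ : Fintype.card V + Fintype.card E ∈ Set.range fe := by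
      rw [hfe, Set.right_mem_Ioc]
      exact Nat.lt_add_of_pos_right Fintype.card_pos
    have hk : k = Fintype.card V + Fintype.card E + edgeSum ends fv e := by
      rw [← hmagic e, he, add_comm]
    exact ⟨hfv, _, hk, (range_eq_Ico_iff_of_add_eq hmagic (by omega) (by omega)).2 hfe⟩
  · rintro ⟨hfv, s, hk, hsum⟩
    have hmagic (e : E) : edgeSum ends fv e + (k - edgeSum ends fv e) = k := by
      have he : edgeSum ends fv e ∈ Set.Ico s (s + Fintype.card E) := hsum ▸ Set.mem_range_self e
      have := he.2
      omega
    exact ⟨fun e => k - edgeSum ends fv e, hfv,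
      (range_eq_Ico_iff_of_add_eq hmagic (by omega) (by omega)).1 hsum, hmagic⟩

end General

section StarLoop

variable {n k : ℕ} {fv : Option (Fin n) → ℕ}

theorem edgeSum_starLoopEnds (v : Option (Fin n)) :
    edgeSum (starLoopEnds n) fv v = fv none + fv v := by
  cases v <;> rfl

theorem range_edgeSum_starLoopEnds (hfv : Set.range fv = Set.Icc 1 (n + 1)) :
    Set.range (edgeSum (starLoopEnds n) fv) =
      Set.Ico (fv none + 1) (fv none + 1 + (n + 1)) := by
  have hcomp : edgeSum (starLoopEnds n) fv = (fv none + ·) ∘ fv := funext edgeSum_starLoopEnds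
  rw [hcomp, Set.range_comp, hfv, Set.image_const_add_Icc, add_right_comm,
    Set.Ico_add_one_right_eq_Icc]

theorem exists_isSuperEdgeMagic_starLoopEnds_iff :
    (∃ fe, IsSuperEdgeMagic (starLoopEnds n) fv fe k) ↔
      Set.range fv = Set.Icc 1 (n + 1) ∧ k = 2 * n + 3 + fv none := by
  simp only [exists_isSuperEdgeMagic_iff, Fintype.card_option, Fintype.card_fin]
  refine and_congr_right fun hfv => ?_
  rw [range_edgeSum_starLoopEnds hfv]
  constructor
  · rintro ⟨s, rfl, hs⟩
    have hs_eq : fv none + 1 = s :=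
      (isLeast_Ico (Nat.lt_add_of_pos_right n.succ_pos)).unique
        (hs ▸ isLeast_Ico (Nat.lt_add_of_pos_right n.succ_pos))
    omega
  · rintro rfl
    exact ⟨fv none + 1, by omega, rfl⟩

end StarLoop

/-- K_{1,n}^l is perfect super edge-magic; the super edge-magic
valences are exactly the integers in [2n+4, 3n+4] (hence exactly n+1 of them). -/
theorem starLoop_perfectSuperEdgeMagic (n : ℕ) (hn : 1 ≤ n) :
    (∀ k : ℕ, 2 * n + 4 ≤ k → k ≤ 3 * n + 4 →
      ∃ fv fe, IsSuperEdgeMagic (starLoopEnds n) fv fe k) ∧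
    (∀ fv fe k, IsSuperEdgeMagic (starLoopEnds n) fv fe k →
      2 * n + 4 ≤ k ∧ k ≤ 3 * n + 4) := by
  constructor
  · intro k hk_low hk_high
    have hc : k - (2 * n + 3) ∈ Set.Icc 1 (Fintype.card (Option (Fin n))) := by
      rw [Fintype.card_option, Fintype.card_fin, Set.mem_Icc]
      omega
    obtain ⟨fv, hfv, hcenter⟩ := exists_range_eq_Icc_card_and_apply_eq none hc
    rw [Fintype.card_option, Fintype.card_fin] at hfv
    exact ⟨fv, exists_isSuperEdgeMagic_starLoopEnds_iff.2 ⟨hfv, by omega⟩⟩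
  · intro fv fe k h
    obtain ⟨hfv, hk⟩ := exists_isSuperEdgeMagic_starLoopEnds_iff.1 ⟨fe, h⟩
    have hcenter : fv none ∈ Set.Icc 1 (n + 1) := hfv ▸ Set.mem_range_self none
    rw [Set.mem_Icc] at hcenter
    omega
end

section
/- Let m = pq where p and q are distinct odd primes, and let n be a positive integer. Then for every integer k with 2mn + 3m + 1 ≤ k ≤ 4mn + 3m + 2 there exists an edge-magic labeling of the crown C_m ⊙ K̄_n with valence k. -/
/-!
Doubling a super edge-magic labeling of a graph with as many vertices as edges, so that the
vertices receive the odd (or the even) numbers and the edges the others, turns consecutive valences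
into every second valence (or into those in between). It thus suffices to realise all `m * n + 1`
consecutive valences by super edge-magic labelings of the crown.

Orient the cycle, and the pendant edges outwards. The `n + 1` heads of the arcs leaving the `i`-th
cycle vertex get the zero-based labels congruent to `τ (i + 1)` modulo the odd number `m`, where `τ`
halves modulo `m`; the one equal to `τ (i + 1) + m * β (i + 1)` goes to the next cycle vertex. The
edge sums at the `i`-th cycle vertex are then
`(m - 1) / 2 + ((i + 1) % m + m * β i) + m * b` for `b = 0, …, n`,
and they are consecutive as soon as the numbers `(i + 1) % m + m * β i` fill a window of length `m`.
The window may start at any `a ≤ m * n`, because it contains exactly one number of each residue.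
-/

open Fintype Function

section Labelings

lemma range_eq_Icc_of_injective {α : Type*} [Fintype α] {f : α → ℕ} (hf : Injective f)
    (hmem : ∀ x, f x ∈ Set.Icc 1 (card α)) : Set.range f = Set.Icc 1 (card α) := by
  refine Set.eq_of_subset_of_ncard_le (Set.range_subset_iff.2 hmem) ?_ (Set.finite_Icc _ _)
  rw [← Set.image_univ, Set.ncard_image_of_injective _ hf, Set.ncard_univ,
    Nat.card_eq_fintype_card, Set.ncard_eq_toFinset_card', Set.toFinset_Icc, Nat.card_Icc,
    Nat.add_sub_cancel]

variable {V E : Type} [Fintype V] [Fintype E] {ends : E → V × V} {fv : V → ℕ} {fe : E → ℕ} {k : ℕ}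

lemma isEdgeMagic_of_injective (hinj : Injective (Sum.elim fv fe))
    (hv : ∀ v, fv v ∈ Set.Icc 1 (card V + card E)) (he : ∀ e, fe e ∈ Set.Icc 1 (card V + card E))
    (hsum : ∀ e, fv (ends e).1 + fe e + fv (ends e).2 = k) : IsEdgeMagic ends fv fe k := by
  refine ⟨hinj, ?_, hsum⟩
  rw [← card_sum] at hv he ⊢
  exact range_eq_Icc_of_injective hinj (Sum.rec hv he)

lemma isSuperEdgeMagic_of_injective {F : V → ℕ} {G : E → ℕ} {s : ℕ}
    (hF : Injective F) (hFlt : ∀ v, F v < card V) (hG : Injective G) (hGlt : ∀ e, G e < card E)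
    (hsum : ∀ e, F (ends e).1 + G e + F (ends e).2 = s) :
    IsSuperEdgeMagic ends (fun v => F v + 1) (fun e => card V + G e + 1) (s + card V + 3) := by
  have hF' : Injective fun v => F v + 1 := (add_left_injective 1).comp hF
  have hG' : Injective fun e => card V + G e + 1 :=
    (add_left_injective 1).comp ((add_right_injective _).comp hG)
  refine ⟨isEdgeMagic_of_injective (hF'.sumElim hG' fun v e => ?_) (fun v => ?_) (fun e => ?_)
    fun e => ?_, range_eq_Icc_of_injective hF' fun v => ?_⟩
  · have := hFlt v
    omega
  · have := hFlt v
    simp only [Set.mem_Icc]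
    omega
  · have := hGlt e
    simp only [Set.mem_Icc]
    omega
  · have := hsum e
    omega
  · exact ⟨Nat.succ_pos _, hFlt v⟩

namespace IsSuperEdgeMagic

lemma vertex_mem_Icc (h : IsSuperEdgeMagic ends fv fe k) (v : V) :
    fv v ∈ Set.Icc 1 (card V) :=
  h.2 ▸ Set.mem_range_self v

lemma edge_mem_Ioc (h : IsSuperEdgeMagic ends fv fe k) (e : E) :
    fe e ∈ Set.Ioc (card V) (card V + card E) := by
  have hmem : fe e ∈ Set.Icc 1 (card V + card E) := h.1.2.1 ▸ Set.mem_range_self (Sum.inr e)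
  refine ⟨not_le.1 fun hle => ?_, hmem.2⟩
  obtain ⟨v, hv⟩ : fe e ∈ Set.range fv := h.2 ▸ ⟨hmem.1, hle⟩
  exact Sum.inl_ne_inr (h.1.1 hv)

lemma vertex_injective (h : IsSuperEdgeMagic ends fv fe k) : Injective fv :=
  h.1.1.comp Sum.inl_injective

lemma edge_injective (h : IsSuperEdgeMagic ends fv fe k) : Injective fe :=
  h.1.1.comp Sum.inr_injective

lemma isEdgeMagic_odd (h : IsSuperEdgeMagic ends fv fe k)
    (hEV : card E ≤ card V) (hVE : card V ≤ card E + 1)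
    {k' : ℕ} (hk : k' + 2 * card V + 2 = 2 * k) :
    IsEdgeMagic ends (fun v => 2 * fv v - 1) (fun e => 2 * (fe e - card V)) k' := by
  have hv := fun v => Set.mem_Icc.1 (h.vertex_mem_Icc v)
  have he := fun e => Set.mem_Ioc.1 (h.edge_mem_Ioc e)
  have hsum := h.1.2.2
  refine isEdgeMagic_of_injective (Injective.sumElim (fun v w hvw => h.vertex_injective ?_)
    (fun e e' hee' => h.edge_injective ?_) fun v e => ?_) (fun v => ?_) (fun e => ?_) (fun e => ?_)
    <;> grind

lemma isEdgeMagic_even (h : IsSuperEdgeMagic ends fv fe k)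
    (hVE : card V ≤ card E) (hEV : card E ≤ card V + 1)
    {k' : ℕ} (hk : k' + 2 * card V + 1 = 2 * k) :
    IsEdgeMagic ends (fun v => 2 * fv v) (fun e => 2 * (fe e - card V) - 1) k' := by
  have hv := fun v => Set.mem_Icc.1 (h.vertex_mem_Icc v)
  have he := fun e => Set.mem_Ioc.1 (h.edge_mem_Ioc e)
  have hsum := h.1.2.2
  refine isEdgeMagic_of_injective (Injective.sumElim (fun v w hvw => h.vertex_injective ?_)
    (fun e e' hee' => h.edge_injective ?_) fun v e => ?_) (fun v => ?_) (fun e => ?_) (fun e => ?_)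
    <;> grind

end IsSuperEdgeMagic

end Labelings

section Crown

variable {m n : ℕ}

/-- The cell (block, column) in an `(n + 1) × ι` array of each element of `ι ⊕ ι × Fin n`: the
element `Sum.inl i` takes the block `β i` of column `i`, and the elements `Sum.inr (i, j)` take the
other `n` blocks of that column in increasing order. -/
def starCell {ι : Type*} (β : ι → Fin (n + 1)) : ι ⊕ ι × Fin n → Fin (n + 1) × ι
  | Sum.inl i => (β i, i)
  | Sum.inr (i, j) => ((β i).succAbove j, i)

lemma starCell_injective {ι : Type*} (β : ι → Fin (n + 1)) : Injective (starCell β) := by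
  rintro (i | ⟨i, j⟩) (i' | ⟨i', j'⟩) h <;>
    obtain ⟨hblock, hcolumn⟩ := Prod.ext_iff.1 h <;> obtain rfl : i = i' := hcolumn
  · rfl
  · exact absurd hblock (Fin.ne_succAbove _ _)
  · exact absurd hblock (Fin.succAbove_ne _ _)
  · rw [Fin.succAbove_right_injective hblock]

/-- The zero-based vertex labels of the crown: the label in block `b` and column `x` is `x + m * b`.
The vertex `v_i` lies in column `τ i`, and its pendant vertices lie in column `τ (i + 1)`, together
with `v_{i+1}`, so that the heads of the arcs leaving `v_i` fill one column. -/
def crownVertexLabel (τ : Fin m → Fin m) (β : Fin m → Fin (n + 1)) (v : Fin m ⊕ Fin m × Fin n) :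
    Fin ((n + 1) * m) :=
  finProdFinEquiv ((starCell β (v.map id (Prod.map (finRotate m) id))).map id τ)

/-- The zero-based edge labels of the crown, to be shifted by the number of vertices: the edges
leaving `v_i` lie in column `ρ i`, in the reversed order of the blocks of their heads. -/
def crownEdgeLabel (ρ : Fin m → Fin m) (β : Fin m → Fin (n + 1)) (e : Fin m ⊕ Fin m × Fin n) :
    Fin ((n + 1) * m) :=
  finProdFinEquiv ((starCell (β ∘ finRotate m) e).map Fin.rev ρ)

lemma crownVertexLabel_injective {τ : Fin m → Fin m} (hτ : Injective τ) (β : Fin m → Fin (n + 1)) :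
    Injective (crownVertexLabel τ β) :=
  finProdFinEquiv.injective.comp <| (injective_id.prodMap hτ).comp <|
    (starCell_injective β).comp <|
      Sum.map_injective.2 ⟨injective_id, (finRotate m).injective.prodMap injective_id⟩

lemma crownEdgeLabel_injective {ρ : Fin m → Fin m} (hρ : Injective ρ) (β : Fin m → Fin (n + 1)) :
    Injective (crownEdgeLabel ρ β) :=
  finProdFinEquiv.injective.comp <| (Fin.rev_injective.prodMap hρ).comp (starCell_injective _)

lemma crownEnds_inl (i : Fin m) :
    crownEnds m n (Sum.inl i) = (Sum.inl i, Sum.inl (finRotate m i)) := by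
  have := i.neZero
  simp only [crownEnds, finRotate_apply, Prod.mk.injEq, Sum.inl.injEq, Fin.ext_iff, Fin.val_add,
    Fin.val_one', Nat.add_mod_mod, and_self]

lemma card_crown : card (Fin m ⊕ Fin m × Fin n) = (n + 1) * m := by
  rw [card_sum, card_prod, card_fin, card_fin]
  ring

lemma crown_label_sum {τ ρ : Fin m → Fin m} {β : Fin m → Fin (n + 1)} {s : ℕ}
    (hsum : ∀ i, (τ i + τ (finRotate m i) + (m * β i + ρ i) : ℕ) = s)
    (e : Fin m ⊕ Fin m × Fin n) :
    (crownVertexLabel τ β (crownEnds m n e).1 + crownEdgeLabel ρ β e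
      + crownVertexLabel τ β (crownEnds m n e).2 : ℕ) = s + m * n := by
  have arc_sum (i : Fin m) (b : Fin (n + 1)) :
      (finProdFinEquiv (β i, τ i) + finProdFinEquiv (b.rev, ρ i)
        + finProdFinEquiv (b, τ (finRotate m i)) : ℕ) = s + m * n := by
    have hrev : m * (b.rev : ℕ) + m * b = m * n := by
      rw [← mul_add, Fin.val_rev, Nat.add_sub_add_right, Nat.sub_add_cancel b.is_le]
    simp only [finProdFinEquiv_apply_val]
    linarith [hsum i]
  rcases e with i | ⟨i, j⟩
  · rw [crownEnds_inl]
    exact arc_sum i (β (finRotate m i))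
  · exact arc_sum i ((β (finRotate m i)).succAbove j)

lemma exists_isSuperEdgeMagic_crown {τ ρ : Fin m → Fin m} {β : Fin m → Fin (n + 1)} {s : ℕ}
    (hτ : Injective τ) (hρ : Injective ρ)
    (hsum : ∀ i, (τ i + τ (finRotate m i) + (m * β i + ρ i) : ℕ) = s) :
    ∃ fv fe, IsSuperEdgeMagic (crownEnds m n) fv fe (s + m * n + (n + 1) * m + 3) := by
  have hcard := card_crown (m := m) (n := n)
  have h := isSuperEdgeMagic_of_injective
    (Fin.val_injective.comp (crownVertexLabel_injective hτ β))
    (fun v => (crownVertexLabel τ β v).isLt.trans_eq hcard.symm)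
    (Fin.val_injective.comp (crownEdgeLabel_injective hρ β))
    (fun e => (crownEdgeLabel ρ β e).isLt.trans_eq hcard.symm) (crown_label_sum hsum)
  rw [hcard] at h
  exact ⟨_, _, h⟩

/-- The residue of `i / 2` modulo `m`, meaningful for odd `m`: the classical super edge-magic
labeling of the odd cycle `C_m`, zero-based. -/
def cycleHalf (i : Fin m) : Fin m :=
  ⟨if (i : ℕ) % 2 = 0 then i / 2 else (i + m) / 2, by split_ifs <;> omega⟩

lemma cycleHalf_injective (hm : Odd m) : Injective (cycleHalf (m := m)) := by
  intro i j h
  obtain ⟨r, rfl⟩ := hm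
  simp only [cycleHalf, Fin.ext_iff] at h ⊢
  split_ifs at h <;> omega

lemma cycleHalf_add_cycleHalf_finRotate (hm : Odd m) (i : Fin m) :
    (cycleHalf i + cycleHalf (finRotate m i) : ℕ) = m / 2 + finRotate m i := by
  obtain ⟨r, rfl⟩ := hm
  have hrotate : (finRotate (2 * r + 1) i : ℕ) =
      if (i : ℕ) = 2 * r then 0 else (i : ℕ) + 1 := by
    simpa only [Fin.ext_iff, Fin.val_last] using coe_finRotate i
  simp only [cycleHalf]
  split_ifs at hrotate ⊢ <;> omega

lemma exists_block_in_window {a : ℕ} (ha : a ≤ m * n) :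
    ∃ (β : Fin m → Fin (n + 1)) (ρ : Fin m → Fin m), Injective ρ ∧
      ∀ x, (x + m * β x + ρ x : ℕ) = a + (m - 1) := by
  -- With `ρ x` the distance of `x + m * β x` from the top of the window `[a, a + m)`, the equation
  -- `m * β x + ρ x = a + (m - 1 - x)` is a division by `m`.
  have hlt (x : Fin m) : a + x.rev < (n + 1) * m := by linarith [x.rev.isLt]
  refine ⟨fun x => Fin.divNat ⟨a + x.rev, hlt x⟩, fun x => Fin.modNat ⟨a + x.rev, hlt x⟩,
    fun x y hxy => ?_, fun x => ?_⟩
  · have hmod : a + x.rev ≡ a + y.rev [MOD m] := Fin.ext_iff.1 hxy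
    exact Fin.rev_injective <| Fin.ext <|
      (hmod.add_left_cancel' a).eq_of_lt_of_lt x.rev.isLt y.rev.isLt
  · simp only [Fin.coe_divNat, Fin.coe_modNat, add_assoc, Nat.div_add_mod, Fin.val_rev]
    omega

lemma exists_isSuperEdgeMagic_crown_of_odd (hm : Odd m) {a : ℕ} (ha : a ≤ m * n) :
    ∃ fv fe, IsSuperEdgeMagic (crownEnds m n) fv fe (2 * ((n + 1) * m) + m / 2 + a + 2) := by
  obtain ⟨β, ρ, hρ, hwindow⟩ := exists_block_in_window ha
  have hsum (i : Fin m) : (cycleHalf i + cycleHalf (finRotate m i)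
      + (m * β (finRotate m i) + ρ (finRotate m i)) : ℕ) = m / 2 + (a + (m - 1)) := by
    rw [cycleHalf_add_cycleHalf_finRotate hm, ← hwindow (finRotate m i)]
    ring
  have hvalence : m / 2 + (a + (m - 1)) + m * n + (n + 1) * m + 3
      = 2 * ((n + 1) * m) + m / 2 + a + 2 := by
    have := hm.pos
    have : (n + 1) * m = m * n + m := by ring
    omega
  exact hvalence ▸ exists_isSuperEdgeMagic_crown (cycleHalf_injective hm)
    (hρ.comp (finRotate m).injective) hsum

end Crown

theorem crown_pq_edgeMagic_range_general (m n : ℕ) (hm : Odd m) :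
    ∀ k : ℕ, 2 * m * n + 3 * m + 1 ≤ k → k ≤ 4 * m * n + 3 * m + 2 →
      ∃ fv fe, IsEdgeMagic (crownEnds m n) fv fe k := by
  intro k hlo hhi
  obtain ⟨a, hk⟩ : ∃ a, k = 2 * (m * n) + 3 * m + 1 + 2 * a ∨
      k = 2 * (m * n) + 3 * m + 2 + 2 * a :=
    ⟨(k - (2 * (m * n) + 3 * m + 1)) / 2, by rw [mul_assoc] at hlo; omega⟩
  have ha : a ≤ m * n := by rw [mul_assoc] at hhi; omega
  obtain ⟨fv, fe, h⟩ := exists_isSuperEdgeMagic_crown_of_odd hm ha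
  have hcard := card_crown (m := m) (n := n)
  have hN : (n + 1) * m = m * n + m := by ring
  have hhalf : 2 * (m / 2) + 1 = m := Nat.two_mul_div_two_add_one_of_odd hm
  rcases hk with hk | hk
  · exact ⟨_, _, h.isEdgeMagic_odd le_rfl (Nat.le_succ _) (by omega)⟩
  · exact ⟨_, _, h.isEdgeMagic_even le_rfl (Nat.le_succ _) (by omega)⟩

/-- for m = pq a product of two distinct odd primes and n ≥ 1,
every integer k with 2mn + 3m + 1 ≤ k ≤ 4mn + 3m + 2 is the valence of an
edge-magic labeling of the crown C_m ⊙ K̄_n. -/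
theorem crown_pq_edgeMagic_range (p q n m : ℕ) (hp : p.Prime) (hq : q.Prime)
    (hop : Odd p) (hoq : Odd q) (hne : p ≠ q) (hn : 1 ≤ n) (hm : m = p * q) :
    ∀ k : ℕ, 2 * m * n + 3 * m + 1 ≤ k → k ≤ 4 * m * n + 3 * m + 2 →
      ∃ fv fe, IsEdgeMagic (crownEnds m n) fv fe k :=
  crown_pq_edgeMagic_range_general m n (hm ▸ hop.mul hoq)
end
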